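/- Let A and B be the companion matrices of f(x) = (x-1)^6 and g(x) = (x+1)^2(x^2+x+1)(x^2+1) respectively, regarded as elements of GL(6,ℤ). Then the elements t = A⁻¹B and r = A⁻¹BA both have infinite order, the subgroup of GL(6,ℤ) generated by A and B equals the subgroup generated by t and r, and this group is the internal free product of the cyclic subgroups ⟨t⟩ and ⟨r⟩; in particular, the hypergeometric group Γ(α,β) with α = (0,0,0,0,0,0) and β = (1/2,1/2,1/3,2/3,1/4,3/4) is isomorphic to ℤ * ℤ, a free group of rank 2. -/

import Mathlib

open Matrix

/-- The companion matrix of `f(x) = (x-1)^6 = x^6 - 6x^5 + 15x^4 - 20x^3 + 15x^2 - 6x + 1`. -/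
def companionF : Matrix (Fin 6) (Fin 6) ℤ :=
  !![0,0,0,0,0,-1; 1,0,0,0,0,6; 0,1,0,0,0,-15; 0,0,1,0,0,20; 0,0,0,1,0,-15; 0,0,0,0,1,6]

/-- The companion matrix of `g(x) = (x+1)^2(x^2+x+1)(x^2+1) = x^6 + 3x^5 + 5x^4 + 6x^3 + 5x^2 + 3x + 1`. -/
def companionG : Matrix (Fin 6) (Fin 6) ℤ :=
  !![0,0,0,0,0,-1; 1,0,0,0,0,-3; 0,1,0,0,0,-5; 0,0,1,0,0,-6; 0,0,0,1,0,-5; 0,0,0,0,1,-3]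


namespace HG

/-- The ping-pong cone. -/
def PP (a b c d e f : ℤ) : Prop :=
  0 ≤ -12*a + 3*b - 2*c + 3*d - 12*e + 191*f ∧
  0 ≤ 12*a - 3*b + 2*c - 3*d + 12*e + 137*f ∧
  0 ≤ -10*a + b - d + 10*e + 45*f ∧
  0 ≤ -7*a - b + c - d - 7*e + 63*f ∧
  0 ≤ 7*a + b - c + d + 7*e + 17*f ∧
  0 ≤ -2*a - b + d + 2*e + 3*f ∧
  0 < -a - b - c - d - e + 23*f ∧
  0 < a + b + c + d + e + f ∧
  0 ≤ -3*a + 5*b - 3*c + 102*f ∧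
  0 ≤ 3*c - 5*d + 3*e + 100*f ∧
  0 ≤ 3*c + 13*d - 50*e + 152*f ∧
  0 ≤ 50*a - 13*b - 3*c + 85*f ∧
  0 ≤ -2*a + 9*b - 9*d - 19*e + 149*f ∧
  0 ≤ 19*a + 9*b - 9*d + 2*e + 86*f ∧
  0 ≤ -17*a + 2*c - 2*e + 115*f ∧
  0 ≤ 2*a - 2*c + 17*e + 70*f

def P (x : Fin 6 → ℤ) : Prop := PP (x 0) (x 1) (x 2) (x 3) (x 4) (x 5)

/-- `S = -B`. -/
def S (x : Fin 6 → ℤ) : Fin 6 → ℤ :=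
  ![x 5, 3 * x 5 - x 0, 5 * x 5 - x 1, 6 * x 5 - x 2, 5 * x 5 - x 3, 3 * x 5 - x 4]

/-- The inverse of `S`. -/
def Sinv (x : Fin 6 → ℤ) : Fin 6 → ℤ :=
  ![3 * x 0 - x 1, 5 * x 0 - x 2, 6 * x 0 - x 3, 5 * x 0 - x 4, 3 * x 0 - x 5, x 0]

/-- `T n` is the `n`-th power of `t`. -/
def T (n : ℤ) (x : Fin 6 → ℤ) : Fin 6 → ℤ :=
  ![x 0 - 9 * n * x 5, x 1 + 10 * n * x 5, x 2 - 26 * n * x 5, x 3 + 10 * n * x 5,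
    x 4 - 9 * n * x 5, x 5]

/-- The involution inverting both `S` and `T`. -/
def Ev (x : Fin 6 → ℤ) : Fin 6 → ℤ :=
  ![3 * x 5 - x 4, 5 * x 5 - x 3, 6 * x 5 - x 2, 5 * x 5 - x 1, 3 * x 5 - x 0, x 5]

def uv : Fin 6 → ℤ := ![-9, 10, -26, 10, -9, 0]

def wv : Fin 6 → ℤ := ![1, 2, 3, 3, 2, 1]

def psi (x : Fin 6 → ℤ) : ℤ := -x 0 + x 1 - x 2 + x 3 - x 4 + x 5

theorem vec_eq {a b c d e f a1 b1 c1 d1 e1 f1 : ℤ} (h0 : a = a1) (h1 : b = b1) (h2 : c = c1)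
    (h3 : d = d1) (h4 : e = e1) (h5 : f = f1) :
    (![a, b, c, d, e, f] : Fin 6 → ℤ) = ![a1, b1, c1, d1, e1, f1] := by
  subst h0 h1 h2 h3 h4 h5; rfl

theorem eta6 (x : Fin 6 → ℤ) : x = ![x 0, x 1, x 2, x 3, x 4, x 5] := by
  ext i; fin_cases i <;> rfl

theorem ext6 {x y : Fin 6 → ℤ} (h0 : x 0 = y 0) (h1 : x 1 = y 1) (h2 : x 2 = y 2)
    (h3 : x 3 = y 3) (h4 : x 4 = y 4) (h5 : x 5 = y 5) : x = y := by
  rw [eta6 x, eta6 y]; exact vec_eq h0 h1 h2 h3 h4 h5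

theorem neg_vec (a b c d e f : ℤ) :
    -(![a, b, c, d, e, f] : Fin 6 → ℤ) = ![-a, -b, -c, -d, -e, -f] := by
  ext i; fin_cases i <;> rfl

theorem S_vec {a b c d e f a1 b1 c1 d1 e1 f1 : ℤ} (h0 : f = a1) (h1 : 3 * f - a = b1)
    (h2 : 5 * f - b = c1) (h3 : 6 * f - c = d1) (h4 : 5 * f - d = e1) (h5 : 3 * f - e = f1) :
    S ![a, b, c, d, e, f] = ![a1, b1, c1, d1, e1, f1] :=
  vec_eq h0 h1 h2 h3 h4 h5

theorem SInv_vec {a b c d e f a1 b1 c1 d1 e1 f1 : ℤ} (h0 : 3 * a - b = a1) (h1 : 5 * a - c = b1)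
    (h2 : 6 * a - d = c1) (h3 : 5 * a - e = d1) (h4 : 3 * a - f = e1) (h5 : a = f1) :
    Sinv ![a, b, c, d, e, f] = ![a1, b1, c1, d1, e1, f1] :=
  vec_eq h0 h1 h2 h3 h4 h5

theorem P_neg_vec {a b c d e f a1 b1 c1 d1 e1 f1 : ℤ} (h : PP a1 b1 c1 d1 e1 f1) (h0 : -a = a1)
    (h1 : -b = b1) (h2 : -c = c1) (h3 : -d = d1) (h4 : -e = e1) (h5 : -f = f1) :
    P (-![a, b, c, d, e, f]) := by
  subst h0 h1 h2 h3 h4 h5; exact h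


theorem main1 {a b c d e f : ℤ} (h : PP a b c d e f) :
    PP (f) (-a + 12*f) (-b - 5*f) (-c + 32*f) (-d - 5*f) (-e + 12*f) := by
  obtain ⟨h1, h2, h3, h4, h5, h6, h7, h8, h9, h10, h11, h12, h13, h14, h15, h16⟩ := h
  refine ⟨?_, ?_, ?_, ?_, ?_, ?_, ?_, ?_, ?_, ?_, ?_, ?_, ?_, ?_, ?_, ?_⟩ <;> linarith

theorem main2 {a b c d e f : ℤ} (h : PP a b c d e f) :
    PP (-e + 12*f) (-3*e + 35*f) (a - 5*e + 48*f) (b - 6*e + 77*f) (c - 5*e + 28*f) (d - 3*e + 41*f) := by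
  obtain ⟨h1, h2, h3, h4, h5, h6, h7, h8, h9, h10, h11, h12, h13, h14, h15, h16⟩ := h
  refine ⟨?_, ?_, ?_, ?_, ?_, ?_, ?_, ?_, ?_, ?_, ?_, ?_, ?_, ?_, ?_, ?_⟩ <;> linarith

theorem main3 {a b c d e f : ℤ} (h : PP a b c d e f) :
    PP (d - 3*e + 41*f) (3*d - 8*e + 111*f) (5*d - 12*e + 170*f) (-a + 6*d - 13*e + 198*f) (-b + 5*d - 9*e + 128*f) (-c + 3*d - 4*e + 95*f) := by
  obtain ⟨h1, h2, h3, h4, h5, h6, h7, h8, h9, h10, h11, h12, h13, h14, h15, h16⟩ := h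
  refine ⟨?_, ?_, ?_, ?_, ?_, ?_, ?_, ?_, ?_, ?_, ?_, ?_, ?_, ?_, ?_, ?_⟩ <;> linarith

theorem main4 {a b c d e f : ℤ} (h : PP a b c d e f) :
    PP (-c + 3*d - 4*e + 95*f) (-3*c + 8*d - 9*e + 244*f) (-5*c + 12*d - 12*e + 364*f) (-6*c + 13*d - 12*e + 400*f) (a - 5*c + 9*d - 7*e + 277*f) (b - 3*c + 4*d - 3*e + 157*f) := by
  obtain ⟨h1, h2, h3, h4, h5, h6, h7, h8, h9, h10, h11, h12, h13, h14, h15, h16⟩ := h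
  refine ⟨?_, ?_, ?_, ?_, ?_, ?_, ?_, ?_, ?_, ?_, ?_, ?_, ?_, ?_, ?_, ?_⟩ <;> linarith

theorem main5 {a b c d e f : ℤ} (h : PP a b c d e f) :
    PP (b - 3*c + 4*d - 3*e + 157*f) (3*b - 8*c + 9*d - 5*e + 376*f) (5*b - 12*c + 12*d - 6*e + 541*f) (6*b - 13*c + 12*d - 6*e + 578*f) (5*b - 9*c + 7*d - 3*e + 385*f) (-a + 3*b - 4*c + 3*d - 2*e + 194*f) := by
  obtain ⟨h1, h2, h3, h4, h5, h6, h7, h8, h9, h10, h11, h12, h13, h14, h15, h16⟩ := h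
  refine ⟨?_, ?_, ?_, ?_, ?_, ?_, ?_, ?_, ?_, ?_, ?_, ?_, ?_, ?_, ?_, ?_⟩ <;> linarith

theorem main6 {a b c d e f : ℤ} (h : PP a b c d e f) :
    PP (-a + 3*b - 4*c + 3*d - 2*e + 194*f) (-3*a + 8*b - 9*c + 5*d - 3*e + 425*f) (-5*a + 12*b - 12*c + 6*d - 5*e + 594*f) (-6*a + 13*b - 12*c + 6*d - 6*e + 623*f) (-5*a + 9*b - 7*c + 3*d - 4*e + 392*f) (-3*a + 4*b - 3*c + 2*d - 3*e + 197*f) := by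
  obtain ⟨h1, h2, h3, h4, h5, h6, h7, h8, h9, h10, h11, h12, h13, h14, h15, h16⟩ := h
  refine ⟨?_, ?_, ?_, ?_, ?_, ?_, ?_, ?_, ?_, ?_, ?_, ?_, ?_, ?_, ?_, ?_⟩ <;> linarith

theorem main7 {a b c d e f : ℤ} (h : PP a b c d e f) :
    PP (-3*a + 4*b - 3*c + 2*d - 3*e + 197*f) (-8*a + 9*b - 5*c + 3*d - 7*e + 397*f) (-12*a + 12*b - 6*c + 5*d - 12*e + 560*f) (-13*a + 12*b - 6*c + 6*d - 13*e + 588*f) (-9*a + 7*b - 3*c + 4*d - 9*e + 362*f) (-4*a + 3*b - 2*c + 3*d - 5*e + 199*f) := by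
  obtain ⟨h1, h2, h3, h4, h5, h6, h7, h8, h9, h10, h11, h12, h13, h14, h15, h16⟩ := h
  refine ⟨?_, ?_, ?_, ?_, ?_, ?_, ?_, ?_, ?_, ?_, ?_, ?_, ?_, ?_, ?_, ?_⟩ <;> linarith

theorem main8 {a b c d e f : ℤ} (h : PP a b c d e f) :
    PP (-4*a + 3*b - 2*c + 3*d - 5*e + 199*f) (-9*a + 5*b - 3*c + 7*d - 12*e + 400*f) (-12*a + 6*b - 5*c + 12*d - 18*e + 598*f) (-12*a + 6*b - 6*c + 13*d - 18*e + 634*f) (-7*a + 3*b - 4*c + 9*d - 12*e + 407*f) (-3*a + 2*b - 3*c + 5*d - 6*e + 235*f) := by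
  obtain ⟨h1, h2, h3, h4, h5, h6, h7, h8, h9, h10, h11, h12, h13, h14, h15, h16⟩ := h
  refine ⟨?_, ?_, ?_, ?_, ?_, ?_, ?_, ?_, ?_, ?_, ?_, ?_, ?_, ?_, ?_, ?_⟩ <;> linarith

theorem main9 {a b c d e f : ℤ} (h : PP a b c d e f) :
    PP (-3*a + 2*b - 3*c + 5*d - 6*e + 235*f) (-5*a + 3*b - 7*c + 12*d - 13*e + 506*f) (-6*a + 5*b - 12*c + 18*d - 18*e + 775*f) (-6*a + 6*b - 13*c + 18*d - 18*e + 812*f) (-3*a + 4*b - 9*c + 12*d - 12*e + 541*f) (-2*a + 3*b - 5*c + 6*d - 6*e + 298*f) := by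
  obtain ⟨h1, h2, h3, h4, h5, h6, h7, h8, h9, h10, h11, h12, h13, h14, h15, h16⟩ := h
  refine ⟨?_, ?_, ?_, ?_, ?_, ?_, ?_, ?_, ?_, ?_, ?_, ?_, ?_, ?_, ?_, ?_⟩ <;> linarith

theorem main10 {a b c d e f : ℤ} (h : PP a b c d e f) :
    PP (-2*a + 3*b - 5*c + 6*d - 6*e + 298*f) (-3*a + 7*b - 12*c + 13*d - 12*e + 659*f) (-5*a + 12*b - 18*c + 18*d - 17*e + 984*f) (-6*a + 13*b - 18*c + 18*d - 18*e + 1013*f) (-4*a + 9*b - 12*c + 12*d - 12*e + 678*f) (-3*a + 5*b - 6*c + 6*d - 6*e + 353*f) := by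
  obtain ⟨h1, h2, h3, h4, h5, h6, h7, h8, h9, h10, h11, h12, h13, h14, h15, h16⟩ := h
  refine ⟨?_, ?_, ?_, ?_, ?_, ?_, ?_, ?_, ?_, ?_, ?_, ?_, ?_, ?_, ?_, ?_⟩ <;> linarith

theorem main11 {a b c d e f : ℤ} (h : PP a b c d e f) :
    PP (-3*a + 5*b - 6*c + 6*d - 6*e + 353*f) (-7*a + 12*b - 13*c + 12*d - 12*e + 761*f) (-12*a + 18*b - 18*c + 17*d - 18*e + 1106*f) (-13*a + 18*b - 18*c + 18*d - 19*e + 1134*f) (-9*a + 12*b - 12*c + 12*d - 12*e + 752*f) (-5*a + 6*b - 6*c + 6*d - 6*e + 381*f) := by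
  obtain ⟨h1, h2, h3, h4, h5, h6, h7, h8, h9, h10, h11, h12, h13, h14, h15, h16⟩ := h
  refine ⟨?_, ?_, ?_, ?_, ?_, ?_, ?_, ?_, ?_, ?_, ?_, ?_, ?_, ?_, ?_, ?_⟩ <;> linarith

theorem main12 {a b c d e f : ℤ} (h : PP a b c d e f) :
    PP (-5*a + 6*b - 6*c + 6*d - 6*e + 381*f) (-12*a + 13*b - 12*c + 12*d - 12*e + 790*f) (-18*a + 18*b - 17*c + 18*d - 18*e + 1144*f) (-18*a + 18*b - 18*c + 19*d - 18*e + 1180*f) (-12*a + 12*b - 12*c + 12*d - 11*e + 771*f) (-6*a + 6*b - 6*c + 6*d - 6*e + 391*f) := by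
  obtain ⟨h1, h2, h3, h4, h5, h6, h7, h8, h9, h10, h11, h12, h13, h14, h15, h16⟩ := h
  refine ⟨?_, ?_, ?_, ?_, ?_, ?_, ?_, ?_, ?_, ?_, ?_, ?_, ?_, ?_, ?_, ?_⟩ <;> linarith

theorem main_vec {a b c d e f : ℤ} (h : PP a b c d e f) (j : ℕ) (h1 : 1 ≤ j) (h2 : j ≤ 12) :
    P (S^[j] (T 1 ![a, b, c, d, e, f])) := by
  have e1 : S (T 1 ![a, b, c, d, e, f]) = ![f, -a + 12*f, -b - 5*f, -c + 32*f, -d - 5*f, -e + 12*f] :=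
    vec_eq (by simp [T]; try ring) (by simp [T]; try ring) (by simp [T]; try ring) (by simp [T]; try ring)
      (by simp [T]; try ring) (by simp [T]; try ring)
  have e2 : S ![f, -a + 12*f, -b - 5*f, -c + 32*f, -d - 5*f, -e + 12*f] = ![-e + 12*f, -3*e + 35*f, a - 5*e + 48*f, b - 6*e + 77*f, c - 5*e + 28*f, d - 3*e + 41*f] :=
    S_vec (by ring) (by ring) (by ring) (by ring) (by ring) (by ring)
  have e3 : S ![-e + 12*f, -3*e + 35*f, a - 5*e + 48*f, b - 6*e + 77*f, c - 5*e + 28*f, d - 3*e + 41*f] = ![d - 3*e + 41*f, 3*d - 8*e + 111*f, 5*d - 12*e + 170*f, -a + 6*d - 13*e + 198*f, -b + 5*d - 9*e + 128*f, -c + 3*d - 4*e + 95*f] :=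
    S_vec (by ring) (by ring) (by ring) (by ring) (by ring) (by ring)
  have e4 : S ![d - 3*e + 41*f, 3*d - 8*e + 111*f, 5*d - 12*e + 170*f, -a + 6*d - 13*e + 198*f, -b + 5*d - 9*e + 128*f, -c + 3*d - 4*e + 95*f] = ![-c + 3*d - 4*e + 95*f, -3*c + 8*d - 9*e + 244*f, -5*c + 12*d - 12*e + 364*f, -6*c + 13*d - 12*e + 400*f, a - 5*c + 9*d - 7*e + 277*f, b - 3*c + 4*d - 3*e + 157*f] :=
    S_vec (by ring) (by ring) (by ring) (by ring) (by ring) (by ring)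
  have e5 : S ![-c + 3*d - 4*e + 95*f, -3*c + 8*d - 9*e + 244*f, -5*c + 12*d - 12*e + 364*f, -6*c + 13*d - 12*e + 400*f, a - 5*c + 9*d - 7*e + 277*f, b - 3*c + 4*d - 3*e + 157*f] = ![b - 3*c + 4*d - 3*e + 157*f, 3*b - 8*c + 9*d - 5*e + 376*f, 5*b - 12*c + 12*d - 6*e + 541*f, 6*b - 13*c + 12*d - 6*e + 578*f, 5*b - 9*c + 7*d - 3*e + 385*f, -a + 3*b - 4*c + 3*d - 2*e + 194*f] :=
    S_vec (by ring) (by ring) (by ring) (by ring) (by ring) (by ring)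
  have e6 : S ![b - 3*c + 4*d - 3*e + 157*f, 3*b - 8*c + 9*d - 5*e + 376*f, 5*b - 12*c + 12*d - 6*e + 541*f, 6*b - 13*c + 12*d - 6*e + 578*f, 5*b - 9*c + 7*d - 3*e + 385*f, -a + 3*b - 4*c + 3*d - 2*e + 194*f] = ![-a + 3*b - 4*c + 3*d - 2*e + 194*f, -3*a + 8*b - 9*c + 5*d - 3*e + 425*f, -5*a + 12*b - 12*c + 6*d - 5*e + 594*f, -6*a + 13*b - 12*c + 6*d - 6*e + 623*f, -5*a + 9*b - 7*c + 3*d - 4*e + 392*f, -3*a + 4*b - 3*c + 2*d - 3*e + 197*f] :=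
    S_vec (by ring) (by ring) (by ring) (by ring) (by ring) (by ring)
  have e7 : S ![-a + 3*b - 4*c + 3*d - 2*e + 194*f, -3*a + 8*b - 9*c + 5*d - 3*e + 425*f, -5*a + 12*b - 12*c + 6*d - 5*e + 594*f, -6*a + 13*b - 12*c + 6*d - 6*e + 623*f, -5*a + 9*b - 7*c + 3*d - 4*e + 392*f, -3*a + 4*b - 3*c + 2*d - 3*e + 197*f] = ![-3*a + 4*b - 3*c + 2*d - 3*e + 197*f, -8*a + 9*b - 5*c + 3*d - 7*e + 397*f, -12*a + 12*b - 6*c + 5*d - 12*e + 560*f, -13*a + 12*b - 6*c + 6*d - 13*e + 588*f, -9*a + 7*b - 3*c + 4*d - 9*e + 362*f, -4*a + 3*b - 2*c + 3*d - 5*e + 199*f] :=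
    S_vec (by ring) (by ring) (by ring) (by ring) (by ring) (by ring)
  have e8 : S ![-3*a + 4*b - 3*c + 2*d - 3*e + 197*f, -8*a + 9*b - 5*c + 3*d - 7*e + 397*f, -12*a + 12*b - 6*c + 5*d - 12*e + 560*f, -13*a + 12*b - 6*c + 6*d - 13*e + 588*f, -9*a + 7*b - 3*c + 4*d - 9*e + 362*f, -4*a + 3*b - 2*c + 3*d - 5*e + 199*f] = ![-4*a + 3*b - 2*c + 3*d - 5*e + 199*f, -9*a + 5*b - 3*c + 7*d - 12*e + 400*f, -12*a + 6*b - 5*c + 12*d - 18*e + 598*f, -12*a + 6*b - 6*c + 13*d - 18*e + 634*f, -7*a + 3*b - 4*c + 9*d - 12*e + 407*f, -3*a + 2*b - 3*c + 5*d - 6*e + 235*f] :=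
    S_vec (by ring) (by ring) (by ring) (by ring) (by ring) (by ring)
  have e9 : S ![-4*a + 3*b - 2*c + 3*d - 5*e + 199*f, -9*a + 5*b - 3*c + 7*d - 12*e + 400*f, -12*a + 6*b - 5*c + 12*d - 18*e + 598*f, -12*a + 6*b - 6*c + 13*d - 18*e + 634*f, -7*a + 3*b - 4*c + 9*d - 12*e + 407*f, -3*a + 2*b - 3*c + 5*d - 6*e + 235*f] = ![-3*a + 2*b - 3*c + 5*d - 6*e + 235*f, -5*a + 3*b - 7*c + 12*d - 13*e + 506*f, -6*a + 5*b - 12*c + 18*d - 18*e + 775*f, -6*a + 6*b - 13*c + 18*d - 18*e + 812*f, -3*a + 4*b - 9*c + 12*d - 12*e + 541*f, -2*a + 3*b - 5*c + 6*d - 6*e + 298*f] :=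
    S_vec (by ring) (by ring) (by ring) (by ring) (by ring) (by ring)
  have e10 : S ![-3*a + 2*b - 3*c + 5*d - 6*e + 235*f, -5*a + 3*b - 7*c + 12*d - 13*e + 506*f, -6*a + 5*b - 12*c + 18*d - 18*e + 775*f, -6*a + 6*b - 13*c + 18*d - 18*e + 812*f, -3*a + 4*b - 9*c + 12*d - 12*e + 541*f, -2*a + 3*b - 5*c + 6*d - 6*e + 298*f] = ![-2*a + 3*b - 5*c + 6*d - 6*e + 298*f, -3*a + 7*b - 12*c + 13*d - 12*e + 659*f, -5*a + 12*b - 18*c + 18*d - 17*e + 984*f, -6*a + 13*b - 18*c + 18*d - 18*e + 1013*f, -4*a + 9*b - 12*c + 12*d - 12*e + 678*f, -3*a + 5*b - 6*c + 6*d - 6*e + 353*f] :=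
    S_vec (by ring) (by ring) (by ring) (by ring) (by ring) (by ring)
  have e11 : S ![-2*a + 3*b - 5*c + 6*d - 6*e + 298*f, -3*a + 7*b - 12*c + 13*d - 12*e + 659*f, -5*a + 12*b - 18*c + 18*d - 17*e + 984*f, -6*a + 13*b - 18*c + 18*d - 18*e + 1013*f, -4*a + 9*b - 12*c + 12*d - 12*e + 678*f, -3*a + 5*b - 6*c + 6*d - 6*e + 353*f] = ![-3*a + 5*b - 6*c + 6*d - 6*e + 353*f, -7*a + 12*b - 13*c + 12*d - 12*e + 761*f, -12*a + 18*b - 18*c + 17*d - 18*e + 1106*f, -13*a + 18*b - 18*c + 18*d - 19*e + 1134*f, -9*a + 12*b - 12*c + 12*d - 12*e + 752*f, -5*a + 6*b - 6*c + 6*d - 6*e + 381*f] :=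
    S_vec (by ring) (by ring) (by ring) (by ring) (by ring) (by ring)
  have e12 : S ![-3*a + 5*b - 6*c + 6*d - 6*e + 353*f, -7*a + 12*b - 13*c + 12*d - 12*e + 761*f, -12*a + 18*b - 18*c + 17*d - 18*e + 1106*f, -13*a + 18*b - 18*c + 18*d - 19*e + 1134*f, -9*a + 12*b - 12*c + 12*d - 12*e + 752*f, -5*a + 6*b - 6*c + 6*d - 6*e + 381*f] = ![-5*a + 6*b - 6*c + 6*d - 6*e + 381*f, -12*a + 13*b - 12*c + 12*d - 12*e + 790*f, -18*a + 18*b - 17*c + 18*d - 18*e + 1144*f, -18*a + 18*b - 18*c + 19*d - 18*e + 1180*f, -12*a + 12*b - 12*c + 12*d - 11*e + 771*f, -6*a + 6*b - 6*c + 6*d - 6*e + 391*f] :=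
    S_vec (by ring) (by ring) (by ring) (by ring) (by ring) (by ring)
  interval_cases j
  · simp only [Function.iterate_succ_apply', Function.iterate_zero, id, e1]
    exact main1 h
  · simp only [Function.iterate_succ_apply', Function.iterate_zero, id, e1, e2]
    exact main2 h
  · simp only [Function.iterate_succ_apply', Function.iterate_zero, id, e1, e2, e3]
    exact main3 h
  · simp only [Function.iterate_succ_apply', Function.iterate_zero, id, e1, e2, e3, e4]
    exact main4 h
  · simp only [Function.iterate_succ_apply', Function.iterate_zero, id, e1, e2, e3, e4, e5]
    exact main5 h
  · simp only [Function.iterate_succ_apply', Function.iterate_zero, id, e1, e2, e3, e4, e5, e6]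
    exact main6 h
  · simp only [Function.iterate_succ_apply', Function.iterate_zero, id, e1, e2, e3, e4, e5, e6, e7]
    exact main7 h
  · simp only [Function.iterate_succ_apply', Function.iterate_zero, id, e1, e2, e3, e4, e5, e6, e7, e8]
    exact main8 h
  · simp only [Function.iterate_succ_apply', Function.iterate_zero, id, e1, e2, e3, e4, e5, e6, e7, e8, e9]
    exact main9 h
  · simp only [Function.iterate_succ_apply', Function.iterate_zero, id, e1, e2, e3, e4, e5, e6, e7, e8, e9, e10]
    exact main10 h
  · simp only [Function.iterate_succ_apply', Function.iterate_zero, id, e1, e2, e3, e4, e5, e6, e7, e8, e9, e10, e11]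
    exact main11 h
  · simp only [Function.iterate_succ_apply', Function.iterate_zero, id, e1, e2, e3, e4, e5, e6, e7, e8, e9, e10, e11, e12]
    exact main12 h


theorem mainInv1 {a b c d e f : ℤ} (h : PP a b c d e f) :
    PP (-3*a + b + 37*f) (-5*a + c + 19*f) (-6*a + d + 64*f) (-5*a + e + 36*f) (-3*a + 28*f) (-a + 9*f) := by
  obtain ⟨h1, h2, h3, h4, h5, h6, h7, h8, h9, h10, h11, h12, h13, h14, h15, h16⟩ := h
  refine ⟨?_, ?_, ?_, ?_, ?_, ?_, ?_, ?_, ?_, ?_, ?_, ?_, ?_, ?_, ?_, ?_⟩ <;> linarith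

theorem mainInv2 {a b c d e f : ℤ} (h : PP a b c d e f) :
    PP (-4*a + 3*b - c + 92*f) (-9*a + 5*b - d + 121*f) (-13*a + 6*b - e + 186*f) (-12*a + 5*b + 157*f) (-8*a + 3*b + 102*f) (-3*a + b + 37*f) := by
  obtain ⟨h1, h2, h3, h4, h5, h6, h7, h8, h9, h10, h11, h12, h13, h14, h15, h16⟩ := h
  refine ⟨?_, ?_, ?_, ?_, ?_, ?_, ?_, ?_, ?_, ?_, ?_, ?_, ?_, ?_, ?_, ?_⟩ <;> linarith

theorem mainInv3 {a b c d e f : ℤ} (h : PP a b c d e f) :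
    PP (-3*a + 4*b - 3*c + d + 155*f) (-7*a + 9*b - 5*c + e + 274*f) (-12*a + 13*b - 6*c + 395*f) (-12*a + 12*b - 5*c + 358*f) (-9*a + 8*b - 3*c + 239*f) (-4*a + 3*b - c + 92*f) := by
  obtain ⟨h1, h2, h3, h4, h5, h6, h7, h8, h9, h10, h11, h12, h13, h14, h15, h16⟩ := h
  refine ⟨?_, ?_, ?_, ?_, ?_, ?_, ?_, ?_, ?_, ?_, ?_, ?_, ?_, ?_, ?_, ?_⟩ <;> linarith

theorem mainInv4 {a b c d e f : ℤ} (h : PP a b c d e f) :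
    PP (-2*a + 3*b - 4*c + 3*d - e + 191*f) (-3*a + 7*b - 9*c + 5*d + 380*f) (-6*a + 12*b - 13*c + 6*d + 572*f) (-6*a + 12*b - 12*c + 5*d + 536*f) (-5*a + 9*b - 8*c + 3*d + 373*f) (-3*a + 4*b - 3*c + d + 155*f) := by
  obtain ⟨h1, h2, h3, h4, h5, h6, h7, h8, h9, h10, h11, h12, h13, h14, h15, h16⟩ := h
  refine ⟨?_, ?_, ?_, ?_, ?_, ?_, ?_, ?_, ?_, ?_, ?_, ?_, ?_, ?_, ?_, ?_⟩ <;> linarith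

theorem mainInv5 {a b c d e f : ℤ} (h : PP a b c d e f) :
    PP (-3*a + 2*b - 3*c + 4*d - 3*e + 193*f) (-4*a + 3*b - 7*c + 9*d - 5*e + 383*f) (-6*a + 6*b - 12*c + 13*d - 6*e + 610*f) (-5*a + 6*b - 12*c + 12*d - 5*e + 582*f) (-3*a + 5*b - 9*c + 8*d - 3*e + 418*f) (-2*a + 3*b - 4*c + 3*d - e + 191*f) := by
  obtain ⟨h1, h2, h3, h4, h5, h6, h7, h8, h9, h10, h11, h12, h13, h14, h15, h16⟩ := h
  refine ⟨?_, ?_, ?_, ?_, ?_, ?_, ?_, ?_, ?_, ?_, ?_, ?_, ?_, ?_, ?_, ?_⟩ <;> linarith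

theorem mainInv6 {a b c d e f : ℤ} (h : PP a b c d e f) :
    PP (-5*a + 3*b - 2*c + 3*d - 4*e + 196*f) (-9*a + 4*b - 3*c + 7*d - 9*e + 355*f) (-13*a + 6*b - 6*c + 12*d - 13*e + 576*f) (-12*a + 5*b - 6*c + 12*d - 12*e + 547*f) (-7*a + 3*b - 5*c + 9*d - 8*e + 388*f) (-3*a + 2*b - 3*c + 4*d - 3*e + 193*f) := by
  obtain ⟨h1, h2, h3, h4, h5, h6, h7, h8, h9, h10, h11, h12, h13, h14, h15, h16⟩ := h
  refine ⟨?_, ?_, ?_, ?_, ?_, ?_, ?_, ?_, ?_, ?_, ?_, ?_, ?_, ?_, ?_, ?_⟩ <;> linarith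

theorem mainInv7 {a b c d e f : ℤ} (h : PP a b c d e f) :
    PP (-6*a + 5*b - 3*c + 2*d - 3*e + 233*f) (-12*a + 9*b - 4*c + 3*d - 7*e + 404*f) (-18*a + 13*b - 6*c + 6*d - 12*e + 629*f) (-18*a + 12*b - 5*c + 6*d - 12*e + 592*f) (-12*a + 7*b - 3*c + 5*d - 9*e + 395*f) (-5*a + 3*b - 2*c + 3*d - 4*e + 196*f) := by
  obtain ⟨h1, h2, h3, h4, h5, h6, h7, h8, h9, h10, h11, h12, h13, h14, h15, h16⟩ := h
  refine ⟨?_, ?_, ?_, ?_, ?_, ?_, ?_, ?_, ?_, ?_, ?_, ?_, ?_, ?_, ?_, ?_⟩ <;> linarith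

theorem mainInv8 {a b c d e f : ℤ} (h : PP a b c d e f) :
    PP (-6*a + 6*b - 5*c + 3*d - 2*e + 295*f) (-12*a + 12*b - 9*c + 4*d - 3*e + 536*f) (-18*a + 18*b - 13*c + 6*d - 6*e + 806*f) (-18*a + 18*b - 12*c + 5*d - 6*e + 770*f) (-13*a + 12*b - 7*c + 3*d - 5*e + 503*f) (-6*a + 5*b - 3*c + 2*d - 3*e + 233*f) := by
  obtain ⟨h1, h2, h3, h4, h5, h6, h7, h8, h9, h10, h11, h12, h13, h14, h15, h16⟩ := h
  refine ⟨?_, ?_, ?_, ?_, ?_, ?_, ?_, ?_, ?_, ?_, ?_, ?_, ?_, ?_, ?_, ?_⟩ <;> linarith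

theorem mainInv9 {a b c d e f : ℤ} (h : PP a b c d e f) :
    PP (-6*a + 6*b - 6*c + 5*d - 3*e + 349*f) (-12*a + 12*b - 12*c + 9*d - 4*e + 669*f) (-18*a + 18*b - 18*c + 13*d - 6*e + 1000*f) (-17*a + 18*b - 18*c + 12*d - 5*e + 972*f) (-12*a + 13*b - 12*c + 7*d - 3*e + 652*f) (-6*a + 6*b - 5*c + 3*d - 2*e + 295*f) := by
  obtain ⟨h1, h2, h3, h4, h5, h6, h7, h8, h9, h10, h11, h12, h13, h14, h15, h16⟩ := h
  refine ⟨?_, ?_, ?_, ?_, ?_, ?_, ?_, ?_, ?_, ?_, ?_, ?_, ?_, ?_, ?_, ?_⟩ <;> linarith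

theorem mainInv10 {a b c d e f : ℤ} (h : PP a b c d e f) :
    PP (-6*a + 6*b - 6*c + 6*d - 5*e + 378*f) (-12*a + 12*b - 12*c + 12*d - 9*e + 745*f) (-19*a + 18*b - 18*c + 18*d - 13*e + 1122*f) (-18*a + 17*b - 18*c + 18*d - 12*e + 1093*f) (-12*a + 12*b - 13*c + 12*d - 7*e + 752*f) (-6*a + 6*b - 6*c + 5*d - 3*e + 349*f) := by
  obtain ⟨h1, h2, h3, h4, h5, h6, h7, h8, h9, h10, h11, h12, h13, h14, h15, h16⟩ := h
  refine ⟨?_, ?_, ?_, ?_, ?_, ?_, ?_, ?_, ?_, ?_, ?_, ?_, ?_, ?_, ?_, ?_⟩ <;> linarith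

theorem mainInv11 {a b c d e f : ℤ} (h : PP a b c d e f) :
    PP (-6*a + 6*b - 6*c + 6*d - 6*e + 389*f) (-11*a + 12*b - 12*c + 12*d - 12*e + 768*f) (-18*a + 19*b - 18*c + 18*d - 18*e + 1175*f) (-18*a + 18*b - 17*c + 18*d - 18*e + 1138*f) (-12*a + 12*b - 12*c + 13*d - 12*e + 785*f) (-6*a + 6*b - 6*c + 6*d - 5*e + 378*f) := by
  obtain ⟨h1, h2, h3, h4, h5, h6, h7, h8, h9, h10, h11, h12, h13, h14, h15, h16⟩ := h
  refine ⟨?_, ?_, ?_, ?_, ?_, ?_, ?_, ?_, ?_, ?_, ?_, ?_, ?_, ?_, ?_, ?_⟩ <;> linarith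

theorem mainInv12 {a b c d e f : ℤ} (h : PP a b c d e f) :
    PP (-7*a + 6*b - 6*c + 6*d - 6*e + 399*f) (-12*a + 11*b - 12*c + 12*d - 12*e + 770*f) (-18*a + 18*b - 19*c + 18*d - 18*e + 1196*f) (-18*a + 18*b - 18*c + 17*d - 18*e + 1160*f) (-12*a + 12*b - 12*c + 12*d - 13*e + 789*f) (-6*a + 6*b - 6*c + 6*d - 6*e + 389*f) := by
  obtain ⟨h1, h2, h3, h4, h5, h6, h7, h8, h9, h10, h11, h12, h13, h14, h15, h16⟩ := h
  refine ⟨?_, ?_, ?_, ?_, ?_, ?_, ?_, ?_, ?_, ?_, ?_, ?_, ?_, ?_, ?_, ?_⟩ <;> linarith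

theorem mainInv_vec {a b c d e f : ℤ} (h : PP a b c d e f) (j : ℕ) (h1 : 1 ≤ j) (h2 : j ≤ 12) :
    P (-(Sinv^[j] (T 1 ![a, b, c, d, e, f]))) := by
  have e1 : Sinv (T 1 ![a, b, c, d, e, f]) = ![3*a - b - 37*f, 5*a - c - 19*f, 6*a - d - 64*f, 5*a - e - 36*f, 3*a - 28*f, a - 9*f] :=
    vec_eq (by simp [T]; try ring) (by simp [T]; try ring) (by simp [T]; try ring) (by simp [T]; try ring)
      (by simp [T]; try ring) (by simp [T]; try ring)
  have e2 : Sinv ![3*a - b - 37*f, 5*a - c - 19*f, 6*a - d - 64*f, 5*a - e - 36*f, 3*a - 28*f, a - 9*f] = ![4*a - 3*b + c - 92*f, 9*a - 5*b + d - 121*f, 13*a - 6*b + e - 186*f, 12*a - 5*b - 157*f, 8*a - 3*b - 102*f, 3*a - b - 37*f] :=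
    SInv_vec (by ring) (by ring) (by ring) (by ring) (by ring) (by ring)
  have e3 : Sinv ![4*a - 3*b + c - 92*f, 9*a - 5*b + d - 121*f, 13*a - 6*b + e - 186*f, 12*a - 5*b - 157*f, 8*a - 3*b - 102*f, 3*a - b - 37*f] = ![3*a - 4*b + 3*c - d - 155*f, 7*a - 9*b + 5*c - e - 274*f, 12*a - 13*b + 6*c - 395*f, 12*a - 12*b + 5*c - 358*f, 9*a - 8*b + 3*c - 239*f, 4*a - 3*b + c - 92*f] :=
    SInv_vec (by ring) (by ring) (by ring) (by ring) (by ring) (by ring)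
  have e4 : Sinv ![3*a - 4*b + 3*c - d - 155*f, 7*a - 9*b + 5*c - e - 274*f, 12*a - 13*b + 6*c - 395*f, 12*a - 12*b + 5*c - 358*f, 9*a - 8*b + 3*c - 239*f, 4*a - 3*b + c - 92*f] = ![2*a - 3*b + 4*c - 3*d + e - 191*f, 3*a - 7*b + 9*c - 5*d - 380*f, 6*a - 12*b + 13*c - 6*d - 572*f, 6*a - 12*b + 12*c - 5*d - 536*f, 5*a - 9*b + 8*c - 3*d - 373*f, 3*a - 4*b + 3*c - d - 155*f] :=
    SInv_vec (by ring) (by ring) (by ring) (by ring) (by ring) (by ring)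
  have e5 : Sinv ![2*a - 3*b + 4*c - 3*d + e - 191*f, 3*a - 7*b + 9*c - 5*d - 380*f, 6*a - 12*b + 13*c - 6*d - 572*f, 6*a - 12*b + 12*c - 5*d - 536*f, 5*a - 9*b + 8*c - 3*d - 373*f, 3*a - 4*b + 3*c - d - 155*f] = ![3*a - 2*b + 3*c - 4*d + 3*e - 193*f, 4*a - 3*b + 7*c - 9*d + 5*e - 383*f, 6*a - 6*b + 12*c - 13*d + 6*e - 610*f, 5*a - 6*b + 12*c - 12*d + 5*e - 582*f, 3*a - 5*b + 9*c - 8*d + 3*e - 418*f, 2*a - 3*b + 4*c - 3*d + e - 191*f] :=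
    SInv_vec (by ring) (by ring) (by ring) (by ring) (by ring) (by ring)
  have e6 : Sinv ![3*a - 2*b + 3*c - 4*d + 3*e - 193*f, 4*a - 3*b + 7*c - 9*d + 5*e - 383*f, 6*a - 6*b + 12*c - 13*d + 6*e - 610*f, 5*a - 6*b + 12*c - 12*d + 5*e - 582*f, 3*a - 5*b + 9*c - 8*d + 3*e - 418*f, 2*a - 3*b + 4*c - 3*d + e - 191*f] = ![5*a - 3*b + 2*c - 3*d + 4*e - 196*f, 9*a - 4*b + 3*c - 7*d + 9*e - 355*f, 13*a - 6*b + 6*c - 12*d + 13*e - 576*f, 12*a - 5*b + 6*c - 12*d + 12*e - 547*f, 7*a - 3*b + 5*c - 9*d + 8*e - 388*f, 3*a - 2*b + 3*c - 4*d + 3*e - 193*f] :=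
    SInv_vec (by ring) (by ring) (by ring) (by ring) (by ring) (by ring)
  have e7 : Sinv ![5*a - 3*b + 2*c - 3*d + 4*e - 196*f, 9*a - 4*b + 3*c - 7*d + 9*e - 355*f, 13*a - 6*b + 6*c - 12*d + 13*e - 576*f, 12*a - 5*b + 6*c - 12*d + 12*e - 547*f, 7*a - 3*b + 5*c - 9*d + 8*e - 388*f, 3*a - 2*b + 3*c - 4*d + 3*e - 193*f] = ![6*a - 5*b + 3*c - 2*d + 3*e - 233*f, 12*a - 9*b + 4*c - 3*d + 7*e - 404*f, 18*a - 13*b + 6*c - 6*d + 12*e - 629*f, 18*a - 12*b + 5*c - 6*d + 12*e - 592*f, 12*a - 7*b + 3*c - 5*d + 9*e - 395*f, 5*a - 3*b + 2*c - 3*d + 4*e - 196*f] :=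
    SInv_vec (by ring) (by ring) (by ring) (by ring) (by ring) (by ring)
  have e8 : Sinv ![6*a - 5*b + 3*c - 2*d + 3*e - 233*f, 12*a - 9*b + 4*c - 3*d + 7*e - 404*f, 18*a - 13*b + 6*c - 6*d + 12*e - 629*f, 18*a - 12*b + 5*c - 6*d + 12*e - 592*f, 12*a - 7*b + 3*c - 5*d + 9*e - 395*f, 5*a - 3*b + 2*c - 3*d + 4*e - 196*f] = ![6*a - 6*b + 5*c - 3*d + 2*e - 295*f, 12*a - 12*b + 9*c - 4*d + 3*e - 536*f, 18*a - 18*b + 13*c - 6*d + 6*e - 806*f, 18*a - 18*b + 12*c - 5*d + 6*e - 770*f, 13*a - 12*b + 7*c - 3*d + 5*e - 503*f, 6*a - 5*b + 3*c - 2*d + 3*e - 233*f] :=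
    SInv_vec (by ring) (by ring) (by ring) (by ring) (by ring) (by ring)
  have e9 : Sinv ![6*a - 6*b + 5*c - 3*d + 2*e - 295*f, 12*a - 12*b + 9*c - 4*d + 3*e - 536*f, 18*a - 18*b + 13*c - 6*d + 6*e - 806*f, 18*a - 18*b + 12*c - 5*d + 6*e - 770*f, 13*a - 12*b + 7*c - 3*d + 5*e - 503*f, 6*a - 5*b + 3*c - 2*d + 3*e - 233*f] = ![6*a - 6*b + 6*c - 5*d + 3*e - 349*f, 12*a - 12*b + 12*c - 9*d + 4*e - 669*f, 18*a - 18*b + 18*c - 13*d + 6*e - 1000*f, 17*a - 18*b + 18*c - 12*d + 5*e - 972*f, 12*a - 13*b + 12*c - 7*d + 3*e - 652*f, 6*a - 6*b + 5*c - 3*d + 2*e - 295*f] :=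
    SInv_vec (by ring) (by ring) (by ring) (by ring) (by ring) (by ring)
  have e10 : Sinv ![6*a - 6*b + 6*c - 5*d + 3*e - 349*f, 12*a - 12*b + 12*c - 9*d + 4*e - 669*f, 18*a - 18*b + 18*c - 13*d + 6*e - 1000*f, 17*a - 18*b + 18*c - 12*d + 5*e - 972*f, 12*a - 13*b + 12*c - 7*d + 3*e - 652*f, 6*a - 6*b + 5*c - 3*d + 2*e - 295*f] = ![6*a - 6*b + 6*c - 6*d + 5*e - 378*f, 12*a - 12*b + 12*c - 12*d + 9*e - 745*f, 19*a - 18*b + 18*c - 18*d + 13*e - 1122*f, 18*a - 17*b + 18*c - 18*d + 12*e - 1093*f, 12*a - 12*b + 13*c - 12*d + 7*e - 752*f, 6*a - 6*b + 6*c - 5*d + 3*e - 349*f] :=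
    SInv_vec (by ring) (by ring) (by ring) (by ring) (by ring) (by ring)
  have e11 : Sinv ![6*a - 6*b + 6*c - 6*d + 5*e - 378*f, 12*a - 12*b + 12*c - 12*d + 9*e - 745*f, 19*a - 18*b + 18*c - 18*d + 13*e - 1122*f, 18*a - 17*b + 18*c - 18*d + 12*e - 1093*f, 12*a - 12*b + 13*c - 12*d + 7*e - 752*f, 6*a - 6*b + 6*c - 5*d + 3*e - 349*f] = ![6*a - 6*b + 6*c - 6*d + 6*e - 389*f, 11*a - 12*b + 12*c - 12*d + 12*e - 768*f, 18*a - 19*b + 18*c - 18*d + 18*e - 1175*f, 18*a - 18*b + 17*c - 18*d + 18*e - 1138*f, 12*a - 12*b + 12*c - 13*d + 12*e - 785*f, 6*a - 6*b + 6*c - 6*d + 5*e - 378*f] :=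
    SInv_vec (by ring) (by ring) (by ring) (by ring) (by ring) (by ring)
  have e12 : Sinv ![6*a - 6*b + 6*c - 6*d + 6*e - 389*f, 11*a - 12*b + 12*c - 12*d + 12*e - 768*f, 18*a - 19*b + 18*c - 18*d + 18*e - 1175*f, 18*a - 18*b + 17*c - 18*d + 18*e - 1138*f, 12*a - 12*b + 12*c - 13*d + 12*e - 785*f, 6*a - 6*b + 6*c - 6*d + 5*e - 378*f] = ![7*a - 6*b + 6*c - 6*d + 6*e - 399*f, 12*a - 11*b + 12*c - 12*d + 12*e - 770*f, 18*a - 18*b + 19*c - 18*d + 18*e - 1196*f, 18*a - 18*b + 18*c - 17*d + 18*e - 1160*f, 12*a - 12*b + 12*c - 12*d + 13*e - 789*f, 6*a - 6*b + 6*c - 6*d + 6*e - 389*f] :=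
    SInv_vec (by ring) (by ring) (by ring) (by ring) (by ring) (by ring)
  interval_cases j
  · simp only [Function.iterate_succ_apply', Function.iterate_zero, id, e1]
    exact P_neg_vec (mainInv1 h) (by ring) (by ring) (by ring) (by ring) (by ring) (by ring)
  · simp only [Function.iterate_succ_apply', Function.iterate_zero, id, e1, e2]
    exact P_neg_vec (mainInv2 h) (by ring) (by ring) (by ring) (by ring) (by ring) (by ring)
  · simp only [Function.iterate_succ_apply', Function.iterate_zero, id, e1, e2, e3]
    exact P_neg_vec (mainInv3 h) (by ring) (by ring) (by ring) (by ring) (by ring) (by ring)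
  · simp only [Function.iterate_succ_apply', Function.iterate_zero, id, e1, e2, e3, e4]
    exact P_neg_vec (mainInv4 h) (by ring) (by ring) (by ring) (by ring) (by ring) (by ring)
  · simp only [Function.iterate_succ_apply', Function.iterate_zero, id, e1, e2, e3, e4, e5]
    exact P_neg_vec (mainInv5 h) (by ring) (by ring) (by ring) (by ring) (by ring) (by ring)
  · simp only [Function.iterate_succ_apply', Function.iterate_zero, id, e1, e2, e3, e4, e5, e6]
    exact P_neg_vec (mainInv6 h) (by ring) (by ring) (by ring) (by ring) (by ring) (by ring)
  · simp only [Function.iterate_succ_apply', Function.iterate_zero, id, e1, e2, e3, e4, e5, e6, e7]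
    exact P_neg_vec (mainInv7 h) (by ring) (by ring) (by ring) (by ring) (by ring) (by ring)
  · simp only [Function.iterate_succ_apply', Function.iterate_zero, id, e1, e2, e3, e4, e5, e6, e7, e8]
    exact P_neg_vec (mainInv8 h) (by ring) (by ring) (by ring) (by ring) (by ring) (by ring)
  · simp only [Function.iterate_succ_apply', Function.iterate_zero, id, e1, e2, e3, e4, e5, e6, e7, e8, e9]
    exact P_neg_vec (mainInv9 h) (by ring) (by ring) (by ring) (by ring) (by ring) (by ring)
  · simp only [Function.iterate_succ_apply', Function.iterate_zero, id, e1, e2, e3, e4, e5, e6, e7, e8, e9, e10]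
    exact P_neg_vec (mainInv10 h) (by ring) (by ring) (by ring) (by ring) (by ring) (by ring)
  · simp only [Function.iterate_succ_apply', Function.iterate_zero, id, e1, e2, e3, e4, e5, e6, e7, e8, e9, e10, e11]
    exact P_neg_vec (mainInv11 h) (by ring) (by ring) (by ring) (by ring) (by ring) (by ring)
  · simp only [Function.iterate_succ_apply', Function.iterate_zero, id, e1, e2, e3, e4, e5, e6, e7, e8, e9, e10, e11, e12]
    exact P_neg_vec (mainInv12 h) (by ring) (by ring) (by ring) (by ring) (by ring) (by ring)


theorem main_S {x : Fin 6 → ℤ} (h : P x) (j : ℕ) (h1 : 1 ≤ j) (h2 : j ≤ 12) :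
    P (S^[j] (T 1 x)) := by
  rw [eta6 x]; exact main_vec h j h1 h2

theorem main_Sinv {x : Fin 6 → ℤ} (h : P x) (j : ℕ) (h1 : 1 ≤ j) (h2 : j ≤ 12) :
    P (-(Sinv^[j] (T 1 x))) := by
  rw [eta6 x]; exact mainInv_vec h j h1 h2



theorem P_add_smul {x y : Fin 6 → ℤ} (hx : P x) (hy : P y) (k : ℤ) (hk : 0 ≤ k) :
    P (x + k • y) := by
  obtain ⟨h1, h2, h3, h4, h5, h6, h7, h8, h9, h10, h11, h12, h13, h14, h15, h16⟩ := hx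
  obtain ⟨g1, g2, g3, g4, g5, g6, g7, g8, g9, g10, g11, g12, g13, g14, g15, g16⟩ := hy
  simp only [P, PP, Pi.add_apply, Pi.smul_apply, smul_eq_mul]
  have key : ∀ u v : ℤ, 0 ≤ u → 0 ≤ v → 0 ≤ u + k * v := fun u v hu hv =>
    add_nonneg hu (mul_nonneg hk hv)
  have keyPos : ∀ u v : ℤ, 0 < u → 0 < v → 0 < u + k * v := fun u v hu hv =>
    add_pos_of_pos_of_nonneg hu (mul_nonneg hk hv.le)
  refine ⟨?_, ?_, ?_, ?_, ?_, ?_, ?_, ?_, ?_, ?_, ?_, ?_, ?_, ?_, ?_, ?_⟩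
  · linarith [key _ _ h1 g1]
  · linarith [key _ _ h2 g2]
  · linarith [key _ _ h3 g3]
  · linarith [key _ _ h4 g4]
  · linarith [key _ _ h5 g5]
  · linarith [key _ _ h6 g6]
  · linarith [keyPos _ _ h7 g7]
  · linarith [keyPos _ _ h8 g8]
  · linarith [key _ _ h9 g9]
  · linarith [key _ _ h10 g10]
  · linarith [key _ _ h11 g11]
  · linarith [key _ _ h12 g12]
  · linarith [key _ _ h13 g13]
  · linarith [key _ _ h14 g14]
  · linarith [key _ _ h15 g15]
  · linarith [key _ _ h16 g16]

theorem phi_pos {x : Fin 6 → ℤ} (hx : P x) : 0 < x 5 := by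
  obtain ⟨h1, h2, h3, h4, h5, h6, h7, h8, h9, h10, h11, h12, h13, h14, h15, h16⟩ := hx
  linarith

theorem psi_T_pos {x : Fin 6 → ℤ} (hx : P x) : 0 < psi (T 1 x) := by
  obtain ⟨h1, h2, h3, h4, h5, h6, h7, h8, h9, h10, h11, h12, h13, h14, h15, h16⟩ := hx
  simp [psi, T]
  linarith

theorem P_Ev {x : Fin 6 → ℤ} (hx : P x) : P (Ev x) := by
  obtain ⟨h1, h2, h3, h4, h5, h6, h7, h8, h9, h10, h11, h12, h13, h14, h15, h16⟩ := hx
  simp only [P, PP, Ev]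
  refine ⟨?_, ?_, ?_, ?_, ?_, ?_, ?_, ?_, ?_, ?_, ?_, ?_, ?_, ?_, ?_, ?_⟩ <;>
    (simp; linarith)

instance (a b c d e f : ℤ) : Decidable (PP a b c d e f) := by unfold PP; infer_instance

instance (x : Fin 6 → ℤ) : Decidable (P x) := by unfold P; infer_instance

theorem P_w : P wv := by decide

theorem P_S_u (j : ℕ) (h1 : 1 ≤ j) (h2 : j ≤ 12) : P (S^[j] uv) := by
  interval_cases j <;> decide +kernel

theorem P_Sinv_u (j : ℕ) (h1 : 1 ≤ j) (h2 : j ≤ 12) : P (-(Sinv^[j] uv)) := by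
  interval_cases j <;> decide +kernel

theorem S_lin (x y : Fin 6 → ℤ) (k : ℤ) : S (x + k • y) = S x + k • S y := by
  apply ext6 <;> simp [S] <;> ring

theorem Sinv_lin (x y : Fin 6 → ℤ) (k : ℤ) : Sinv (x + k • y) = Sinv x + k • Sinv y := by
  apply ext6 <;> simp [Sinv] <;> ring

theorem S_iter_lin (j : ℕ) (x y : Fin 6 → ℤ) (k : ℤ) :
    S^[j] (x + k • y) = S^[j] x + k • S^[j] y := by
  induction j with
  | zero => rfl
  | succ j ih => simp only [Function.iterate_succ_apply', ih, S_lin]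

theorem Sinv_iter_lin (j : ℕ) (x y : Fin 6 → ℤ) (k : ℤ) :
    Sinv^[j] (x + k • y) = Sinv^[j] x + k • Sinv^[j] y := by
  induction j with
  | zero => rfl
  | succ j ih => simp only [Function.iterate_succ_apply', ih, Sinv_lin]

theorem S_neg (x : Fin 6 → ℤ) : S (-x) = -S x := by
  apply ext6 <;> simp [S] <;> ring

theorem Sinv_neg (x : Fin 6 → ℤ) : Sinv (-x) = -Sinv x := by
  apply ext6 <;> simp [Sinv] <;> ring

theorem T_neg (n : ℤ) (x : Fin 6 → ℤ) : T n (-x) = -T n x := by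
  apply ext6 <;> simp [T] <;> ring

theorem S_Sinv (x : Fin 6 → ℤ) : S (Sinv x) = x := by
  apply ext6 <;> simp [S, Sinv]

theorem Sinv_S (x : Fin 6 → ℤ) : Sinv (S x) = x := by
  apply ext6 <;> simp [S, Sinv]

theorem T_T (n m : ℤ) (x : Fin 6 → ℤ) : T n (T m x) = T (n + m) x := by
  apply ext6 <;> simp [T] <;> ring

theorem T_zero (x : Fin 6 → ℤ) : T 0 x = x := by
  apply ext6 <;> simp [T]

theorem Ev_Ev (x : Fin 6 → ℤ) : Ev (Ev x) = x := by
  apply ext6 <;> simp [Ev]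

theorem Ev_neg (x : Fin 6 → ℤ) : Ev (-x) = -Ev x := by
  apply ext6 <;> simp [Ev] <;> ring

theorem Ev_S (x : Fin 6 → ℤ) : Ev (S x) = Sinv (Ev x) := by
  apply ext6 <;> simp [Ev, S, Sinv] <;> ring

theorem Ev_Sinv (x : Fin 6 → ℤ) : Ev (Sinv x) = S (Ev x) := by
  apply ext6 <;> simp [Ev, S, Sinv]

theorem Ev_T (n : ℤ) (x : Fin 6 → ℤ) : Ev (T n x) = T (-n) (Ev x) := by
  apply ext6 <;> simp [Ev, T] <;> ring

theorem Ev_S_iter (j : ℕ) (x : Fin 6 → ℤ) : Ev (S^[j] x) = Sinv^[j] (Ev x) := by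
  induction j with
  | zero => rfl
  | succ j ih => simp only [Function.iterate_succ_apply', ← ih, Ev_S]

theorem Ev_Sinv_iter (j : ℕ) (x : Fin 6 → ℤ) : Ev (Sinv^[j] x) = S^[j] (Ev x) := by
  induction j with
  | zero => rfl
  | succ j ih => simp only [Function.iterate_succ_apply', ← ih, Ev_Sinv]

theorem psi_S (x : Fin 6 → ℤ) : psi (S x) = psi x := by
  simp [psi, S]; ring

theorem psi_Sinv (x : Fin 6 → ℤ) : psi (Sinv x) = psi x := by
  simp [psi, Sinv]; ring

theorem psi_S_iter (j : ℕ) (x : Fin 6 → ℤ) : psi (S^[j] x) = psi x := by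
  induction j with
  | zero => rfl
  | succ j ih => rw [Function.iterate_succ_apply', psi_S, ih]

theorem psi_Sinv_iter (j : ℕ) (x : Fin 6 → ℤ) : psi (Sinv^[j] x) = psi x := by
  induction j with
  | zero => rfl
  | succ j ih => rw [Function.iterate_succ_apply', psi_Sinv, ih]

theorem S_3 (x : Fin 6 → ℤ) : S^[3] x =
    ![x 3 - 3 * x 4 + 4 * x 5,
      3 * x 3 - 8 * x 4 + 9 * x 5,
      5 * x 3 - 12 * x 4 + 12 * x 5,
      -x 0 + 6 * x 3 - 13 * x 4 + 12 * x 5,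
      -x 1 + 5 * x 3 - 9 * x 4 + 7 * x 5,
      -x 2 + 3 * x 3 - 4 * x 4 + 3 * x 5] := by
  simp only [Function.iterate_succ_apply', Function.iterate_zero, id]
  apply ext6 <;> simp [S] <;> ring

theorem S_6 (x : Fin 6 → ℤ) : S^[6] x =
    ![-x 0 + 3 * x 1 - 4 * x 2 + 3 * x 3 - 2 * x 4 + 3 * x 5,
      -3 * x 0 + 8 * x 1 - 9 * x 2 + 5 * x 3 - 3 * x 4 + 7 * x 5,
      -5 * x 0 + 12 * x 1 - 12 * x 2 + 6 * x 3 - 5 * x 4 + 12 * x 5,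
      -6 * x 0 + 13 * x 1 - 12 * x 2 + 6 * x 3 - 6 * x 4 + 13 * x 5,
      -5 * x 0 + 9 * x 1 - 7 * x 2 + 3 * x 3 - 4 * x 4 + 9 * x 5,
      -3 * x 0 + 4 * x 1 - 3 * x 2 + 2 * x 3 - 3 * x 4 + 5 * x 5] := by
  rw [Function.iterate_add_apply S 3 3 x, S_3, S_3]
  apply ext6 <;> simp <;> ring

theorem S_12 (x : Fin 6 → ℤ) : S^[12] x = x + (6 * psi x) • wv := by
  rw [Function.iterate_add_apply S 6 6 x, S_6, S_6]
  apply ext6 <;> simp [psi, wv] <;> ring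

theorem Sinv_12 (x : Fin 6 → ℤ) : Sinv^[12] x = x + (-(6 * psi x)) • wv := by
  have h := S_12 (Sinv^[12] x)
  have h2 : S^[12] (Sinv^[12] x) = x := Function.LeftInverse.iterate S_Sinv 12 x
  rw [h2, psi_Sinv_iter] at h
  rw [neg_smul, ← sub_eq_add_neg, eq_sub_iff_add_eq]
  exact h.symm

theorem P_S_of (z : Fin 6 → ℤ) (hz : ∀ j, 1 ≤ j → j ≤ 12 → P (S^[j] z)) (hp : 0 ≤ psi z)
    (m : ℕ) (hm : 1 ≤ m) : P (S^[m] z) := by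
  induction m using Nat.strong_induction_on with
  | _ m ih =>
    by_cases h : m ≤ 12
    · exact hz m hm h
    · obtain ⟨k, rfl⟩ : ∃ k, m = 12 + k := ⟨m - 12, by omega⟩
      rw [Function.iterate_add_apply, S_12]
      refine P_add_smul (ih k (by omega) (by omega)) P_w _ ?_
      rw [psi_S_iter]; linarith

theorem P_Sinv_of (z : Fin 6 → ℤ) (hz : ∀ j, 1 ≤ j → j ≤ 12 → P (-(Sinv^[j] z))) (hp : 0 ≤ psi z)
    (m : ℕ) (hm : 1 ≤ m) : P (-(Sinv^[m] z)) := by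
  induction m using Nat.strong_induction_on with
  | _ m ih =>
    by_cases h : m ≤ 12
    · exact hz m hm h
    · obtain ⟨k, rfl⟩ : ∃ k, m = 12 + k := ⟨m - 12, by omega⟩
      rw [Function.iterate_add_apply, Sinv_12, neg_add, neg_smul, neg_neg]
      refine P_add_smul (ih k (by omega) (by omega)) P_w _ ?_
      rw [psi_Sinv_iter]; linarith

theorem T_eq (n : ℤ) (x : Fin 6 → ℤ) : T n x = T 1 x + ((n - 1) * x 5) • uv := by
  apply ext6 <;> simp [T, uv] <;> ring

theorem psi_T (n : ℤ) (x : Fin 6 → ℤ) : psi (T n x) = psi (T 1 x) + 64 * ((n - 1) * x 5) := by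
  simp [T, psi]; ring

theorem psi_T_nonneg {x : Fin 6 → ℤ} (hx : P x) (n : ℤ) (hn : 1 ≤ n) : 0 ≤ psi (T n x) := by
  rw [psi_T]
  have := psi_T_pos hx
  have := mul_nonneg (sub_nonneg.2 hn) (phi_pos hx).le
  linarith

theorem P_ST {x : Fin 6 → ℤ} (hx : P x) (n : ℤ) (hn : 1 ≤ n) (m : ℕ) (hm : 1 ≤ m) :
    P (S^[m] (T n x)) := by
  refine P_S_of _ (fun j h1 h2 => ?_) (psi_T_nonneg hx n hn) m hm
  rw [T_eq, S_iter_lin]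
  exact P_add_smul (main_S hx j h1 h2) (P_S_u j h1 h2) _
    (mul_nonneg (sub_nonneg.2 hn) (phi_pos hx).le)

theorem P_SinvT {x : Fin 6 → ℤ} (hx : P x) (n : ℤ) (hn : 1 ≤ n) (m : ℕ) (hm : 1 ≤ m) :
    P (-(Sinv^[m] (T n x))) := by
  refine P_Sinv_of _ (fun j h1 h2 => ?_) (psi_T_nonneg hx n hn) m hm
  rw [T_eq, Sinv_iter_lin, neg_add, ← smul_neg]
  exact P_add_smul (main_Sinv hx j h1 h2) (P_Sinv_u j h1 h2) _
    (mul_nonneg (sub_nonneg.2 hn) (phi_pos hx).le)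

/-- The symmetric cone. -/
def Y (x : Fin 6 → ℤ) : Prop := P x ∨ P (-x)

theorem Y_neg {x : Fin 6 → ℤ} (h : Y x) : Y (-x) := by
  rcases h with h | h
  · right; rwa [neg_neg]
  · left; exact h

theorem Y_ST_of_P {x : Fin 6 → ℤ} (hx : P x) (n : ℤ) (hn : n ≠ 0) (m : ℕ) (hm : 1 ≤ m) :
    Y (S^[m] (T n x)) ∧ Y (Sinv^[m] (T n x)) := by
  rcases lt_or_gt_of_ne hn with h | h
  · constructor
    · right
      have := P_Ev (P_SinvT (P_Ev hx) (-n) (by omega) m hm)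
      rwa [Ev_neg, Ev_Sinv_iter, Ev_T, Ev_Ev, neg_neg] at this
    · left
      have := P_Ev (P_ST (P_Ev hx) (-n) (by omega) m hm)
      rwa [Ev_S_iter, Ev_T, Ev_Ev, neg_neg] at this
  · exact ⟨Or.inl (P_ST hx n (by omega) m hm), Or.inr (P_SinvT hx n (by omega) m hm)⟩

theorem S_iter_neg (j : ℕ) (x : Fin 6 → ℤ) : S^[j] (-x) = -(S^[j] x) := by
  induction j with
  | zero => rfl
  | succ j ih => simp only [Function.iterate_succ_apply', ih, S_neg]

theorem Sinv_iter_neg (j : ℕ) (x : Fin 6 → ℤ) : Sinv^[j] (-x) = -(Sinv^[j] x) := by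
  induction j with
  | zero => rfl
  | succ j ih => simp only [Function.iterate_succ_apply', ih, Sinv_neg]

theorem Y_ST {x : Fin 6 → ℤ} (hx : Y x) (n : ℤ) (hn : n ≠ 0) (m : ℕ) (hm : 1 ≤ m) :
    Y (S^[m] (T n x)) ∧ Y (Sinv^[m] (T n x)) := by
  rcases hx with h | h
  · exact Y_ST_of_P h n hn m hm
  · have := Y_ST_of_P h n hn m hm
    rw [T_neg, S_iter_neg, Sinv_iter_neg] at this
    exact ⟨by simpa using Y_neg this.1, by simpa using Y_neg this.2⟩

theorem P_T_not {x : Fin 6 → ℤ} (hx : P x) (n : ℤ) (hn : n ≠ 0) : ¬ Y (T n x) := by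
  intro h
  have hp := phi_pos hx
  have h5 : (T n x) 5 = x 5 := by simp [T]
  rcases h with h | h
  · obtain ⟨-, -, -, -, -, -, h7, h8, -⟩ := hx
    obtain ⟨-, -, -, -, -, -, g7, g8, -⟩ := h
    simp [T] at g7 g8
    rcases lt_or_gt_of_ne hn with h | h
    · have : 0 ≤ (-1 - n) * x 5 := mul_nonneg (by omega) hp.le
      linarith
    · have : 0 ≤ (n - 1) * x 5 := mul_nonneg (by omega) hp.le
      linarith
  · have := phi_pos h
    simp only [Pi.neg_apply, h5] at this
    omega

theorem Y_T_not {x : Fin 6 → ℤ} (hx : Y x) (n : ℤ) (hn : n ≠ 0) : ¬ Y (T n x) := by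
  rcases hx with h | h
  · exact P_T_not h n hn
  · intro hh
    exact P_T_not h n hn (by rw [T_neg]; exact Y_neg hh)

/-- `t` as a permutation. -/
def tP : Equiv.Perm (Fin 6 → ℤ) where
  toFun := T 1
  invFun := T (-1)
  left_inv x := by rw [T_T]; exact T_zero x
  right_inv x := by rw [T_T]; exact T_zero x

/-- `B` as a permutation. -/
def bP : Equiv.Perm (Fin 6 → ℤ) where
  toFun x := -(S x)
  invFun x := -(Sinv x)
  left_inv x := by beta_reduce; rw [Sinv_neg, neg_neg, Sinv_S]
  right_inv x := by beta_reduce; rw [S_neg, neg_neg, S_Sinv]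

theorem tP_pow (n : ℕ) (x : Fin 6 → ℤ) : (tP ^ n) x = T n x := by
  induction n with
  | zero => simp [T_zero]
  | succ n ih =>
    rw [pow_succ', Equiv.Perm.mul_apply, ih]
    change T 1 (T n x) = _
    rw [T_T]; push_cast; rw [add_comm]

theorem tP_inv_pow (n : ℕ) (x : Fin 6 → ℤ) : (tP⁻¹ ^ n) x = T (-n) x := by
  induction n with
  | zero => simp [T_zero]
  | succ n ih =>
    rw [pow_succ', Equiv.Perm.mul_apply, ih]
    change T (-1) (T (-n) x) = _
    rw [T_T]; push_cast; congr 1; ring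

theorem tP_zpow (n : ℤ) (x : Fin 6 → ℤ) : (tP ^ n) x = T n x := by
  obtain ⟨k, rfl | rfl⟩ := n.eq_nat_or_neg
  · rw [zpow_natCast, tP_pow]
  · rw [_root_.zpow_neg, ← _root_.inv_zpow, zpow_natCast, tP_inv_pow]

theorem bP_pow (n : ℕ) (x : Fin 6 → ℤ) : (bP ^ n) x = S^[n] x ∨ (bP ^ n) x = -(S^[n] x) := by
  induction n with
  | zero => left; rfl
  | succ n ih =>
    rw [pow_succ', Equiv.Perm.mul_apply, Function.iterate_succ_apply']
    rcases ih with h | h <;> rw [h]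
    · right; rfl
    · left; change -(S _) = _; rw [S_neg, neg_neg]

theorem bP_inv_pow (n : ℕ) (x : Fin 6 → ℤ) :
    (bP⁻¹ ^ n) x = Sinv^[n] x ∨ (bP⁻¹ ^ n) x = -(Sinv^[n] x) := by
  induction n with
  | zero => left; rfl
  | succ n ih =>
    rw [pow_succ', Equiv.Perm.mul_apply, Function.iterate_succ_apply']
    rcases ih with h | h <;> rw [h]
    · right; rfl
    · left; change -(Sinv _) = _; rw [Sinv_neg, neg_neg]

theorem Y_of_or {x y : Fin 6 → ℤ} (h : x = y ∨ x = -y) (hy : Y y) : Y x := by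
  rcases h with rfl | rfl
  · exact hy
  · exact Y_neg hy

theorem Y_bT {x : Fin 6 → ℤ} (hx : Y x) (n : ℤ) (hn : n ≠ 0) (m : ℤ) (hm : m ≠ 0) :
    Y ((bP ^ m) (T n x)) := by
  obtain ⟨k, rfl | rfl⟩ := m.eq_nat_or_neg
  · rw [zpow_natCast]
    exact Y_of_or (bP_pow k _) (Y_ST hx n hn k (by omega)).1
  · rw [_root_.zpow_neg, ← _root_.inv_zpow, zpow_natCast]
    exact Y_of_or (bP_inv_pow k _) (Y_ST hx n hn k (by omega)).2

/-- The ping-pong sets. -/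
def XX : Fin 2 → Set (Fin 6 → ℤ) :=
  ![{y | ∃ n : ℤ, n ≠ 0 ∧ ∃ x, Y x ∧ y = T n x}, {y | Y y}]

theorem XX_disj : Disjoint (XX 0) (XX 1) := by
  rw [Set.disjoint_left]
  rintro _ ⟨n, hn, x, hx, rfl⟩ h
  exact Y_T_not hx n hn h

open scoped Pointwise in
theorem perm_free : Function.Injective (FreeGroup.lift ![tP, bP]) := by
  have : FreeGroup.lift ![tP, bP] =
      (Monoid.CoprodI.lift fun i => FreeGroup.lift fun _ => (![tP, bP] : Fin 2 → _) i).comp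
        (@freeGroupEquivCoprodI (Fin 2)).toMonoidHom := by
    ext i
    simp
  rw [this, MonoidHom.coe_comp]
  refine Function.Injective.comp ?_ (MulEquiv.injective freeGroupEquivCoprodI)
  let H : Fin 2 → Type := fun _i => FreeGroup Unit
  let f : ∀ i, H i →* Equiv.Perm (Fin 6 → ℤ) :=
    fun i => FreeGroup.lift fun _ => (![tP, bP] : Fin 2 → _) i
  change Function.Injective (Monoid.CoprodI.lift f)
  apply Monoid.CoprodI.lift_injective_of_ping_pong f _ XX
  · intro i
    fin_cases i
    · exact ⟨T 1 wv, 1, one_ne_zero, wv, Or.inl P_w, rfl⟩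
    · exact ⟨wv, Or.inl P_w⟩
  · intro i j hij
    fin_cases i <;> fin_cases j
    · exact absurd rfl hij
    · exact XX_disj
    · exact XX_disj.symm
    · exact absurd rfl hij
  · change Pairwise fun i j => ∀ h : H i, h ≠ 1 → f i h • XX j ⊆ XX i
    intro i j hij
    refine FreeGroup.freeGroupUnitEquivInt.forall_congr_left.mpr ?_
    intro n hne1
    change FreeGroup.lift (fun _ => (![tP, bP] : Fin 2 → _) i) (FreeGroup.of () ^ n) • XX j ⊆ XX i
    simp only [map_zpow, FreeGroup.lift_apply_of]
    have hn : n ≠ 0 := by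
      rintro rfl
      apply hne1
      simp [H, FreeGroup.freeGroupUnitEquivInt]
    clear hne1
    rintro _ ⟨x, hx, rfl⟩
    fin_cases i <;> fin_cases j
    · exact absurd rfl hij
    · exact ⟨n, hn, x, hx, tP_zpow n x⟩
    · obtain ⟨k, hk, z, hz, rfl⟩ := hx
      exact Y_bT hz k hk n hn
    · exact absurd rfl hij
  · right
    refine ⟨0, ?_⟩
    change 3 ≤ Cardinal.mk (FreeGroup Unit)
    rw [FreeGroup.freeGroupUnitEquivInt.cardinal_eq, Cardinal.mk_denumerable]
    exact (Cardinal.natCast_lt_aleph0 (n := 3)).le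

/-- Matrices as permutations of the lattice. -/
def rho : GL (Fin 6) ℤ →* Equiv.Perm (Fin 6 → ℤ) :=
  MonoidHom.mk' (fun g =>
    { toFun := fun x => (g : Matrix (Fin 6) (Fin 6) ℤ) *ᵥ x
      invFun := fun x => ((g⁻¹ : GL (Fin 6) ℤ) : Matrix (Fin 6) (Fin 6) ℤ) *ᵥ x
      left_inv := fun x => by
        beta_reduce; rw [Matrix.mulVec_mulVec, Units.inv_mul, Matrix.one_mulVec]
      right_inv := fun x => by
        beta_reduce; rw [Matrix.mulVec_mulVec, Units.mul_inv, Matrix.one_mulVec] })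
    (fun g h => by ext1 x; simp [Matrix.mulVec_mulVec])

theorem rho_B (B : GL (Fin 6) ℤ) (hB : (B : Matrix (Fin 6) (Fin 6) ℤ) = companionG) :
    rho B = bP := by
  ext1 x
  change (B : Matrix (Fin 6) (Fin 6) ℤ) *ᵥ x = -(S x)
  rw [hB]
  apply ext6 <;> simp [companionG, S, Matrix.mulVec, dotProduct, Fin.sum_univ_six] <;> ring

theorem rho_t (A B : GL (Fin 6) ℤ) (hA : (A : Matrix (Fin 6) (Fin 6) ℤ) = companionF)
    (hB : (B : Matrix (Fin 6) (Fin 6) ℤ) = companionG) :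
    rho (A⁻¹ * B) = tP := by
  rw [map_mul, map_inv, inv_mul_eq_iff_eq_mul, rho_B B hB]
  ext1 x
  change -(S x) = (A : Matrix (Fin 6) (Fin 6) ℤ) *ᵥ (T 1 x)
  rw [hA]
  apply ext6 <;> simp [companionF, S, T, Matrix.mulVec, dotProduct, Fin.sum_univ_six] <;> ring

theorem free_tB (A B : GL (Fin 6) ℤ) (hA : (A : Matrix (Fin 6) (Fin 6) ℤ) = companionF)
    (hB : (B : Matrix (Fin 6) (Fin 6) ℤ) = companionG) :
    Function.Injective (FreeGroup.lift ![A⁻¹ * B, B]) := by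
  have h : (rho.comp (FreeGroup.lift ![A⁻¹ * B, B])) = FreeGroup.lift ![tP, bP] := by
    ext1 i
    fin_cases i
    · simpa using rho_t A B hA hB
    · simpa using rho_B B hB
  have := perm_free
  rw [← h, MonoidHom.coe_comp] at this
  exact this.of_comp

theorem free_tr (A B : GL (Fin 6) ℤ) (hA : (A : Matrix (Fin 6) (Fin 6) ℤ) = companionF)
    (hB : (B : Matrix (Fin 6) (Fin 6) ℤ) = companionG) :
    Function.Injective (FreeGroup.lift ![A⁻¹ * B, A⁻¹ * B * A]) := by
  have h : (MulAut.conj (B⁻¹ * A)).toMonoidHom.comp (FreeGroup.lift ![A⁻¹ * B, A⁻¹ * B * A]) =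
      FreeGroup.lift ![A⁻¹ * B, B] := by
    ext1 i
    fin_cases i
    · simp [mul_assoc]
    · simp [mul_assoc]
  have := free_tB A B hA hB
  rw [← h, MonoidHom.coe_comp] at this
  exact this.of_comp

end HG

/-- The hypergeometric group with `α = (0,0,0,0,0,0)`, `β = (1/2,1/2,1/3,2/3,1/4,3/4)` is
free of rank two: `t = A⁻¹B` and `r = A⁻¹BA` have infinite order, generate the group
generated by `A` and `B`, and the group is the internal free product of `⟨t⟩` and `⟨r⟩`;
in particular it is isomorphic to `ℤ * ℤ`, the free group of rank `2`. -/
theorem hypergeometric_free_of_rank_two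
    (A B : GL (Fin 6) ℤ)
    (hA : (A : Matrix (Fin 6) (Fin 6) ℤ) = companionF)
    (hB : (B : Matrix (Fin 6) (Fin 6) ℤ) = companionG) :
    ¬ IsOfFinOrder (A⁻¹ * B) ∧ ¬ IsOfFinOrder (A⁻¹ * B * A) ∧
    Subgroup.closure {A, B} = Subgroup.closure {A⁻¹ * B, A⁻¹ * B * A} ∧
    Function.Injective
      (Monoid.Coprod.lift (Subgroup.zpowers (A⁻¹ * B)).subtype
        (Subgroup.zpowers (A⁻¹ * B * A)).subtype) ∧
    (Monoid.Coprod.lift (Subgroup.zpowers (A⁻¹ * B)).subtype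
        (Subgroup.zpowers (A⁻¹ * B * A)).subtype).range = Subgroup.closure {A, B} ∧
    Nonempty ((Subgroup.closure {A, B} : Subgroup (GL (Fin 6) ℤ)) ≃* FreeGroup (Fin 2)) := by
  have hinj := HG.free_tr A B hA hB
  have hBt : B = A * (A⁻¹ * B) := by group
  have hAr : A = (A⁻¹ * B)⁻¹ * (A⁻¹ * B * A) := by group
  have hcl : Subgroup.closure {A, B} = Subgroup.closure {A⁻¹ * B, A⁻¹ * B * A} := by
    apply le_antisymm
    · have ht : A⁻¹ * B ∈ Subgroup.closure {A⁻¹ * B, A⁻¹ * B * A} :=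
        Subgroup.subset_closure (by simp)
      have hr : A⁻¹ * B * A ∈ Subgroup.closure {A⁻¹ * B, A⁻¹ * B * A} :=
        Subgroup.subset_closure (by simp)
      have ha : A ∈ Subgroup.closure {A⁻¹ * B, A⁻¹ * B * A} := by
        have := mul_mem (inv_mem ht) hr
        rwa [← hAr] at this
      have hb : B ∈ Subgroup.closure {A⁻¹ * B, A⁻¹ * B * A} := by
        have := mul_mem ha ht
        rwa [← hBt] at this
      rw [Subgroup.closure_le]
      rintro x (rfl | rfl)
      · exact ha
      · exact hb
    · have ha : A ∈ Subgroup.closure {A, B} := Subgroup.subset_closure (by simp)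
      have hb : B ∈ Subgroup.closure {A, B} := Subgroup.subset_closure (by simp)
      rw [Subgroup.closure_le]
      rintro x (rfl | rfl)
      · exact mul_mem (inv_mem ha) hb
      · exact mul_mem (mul_mem (inv_mem ha) hb) ha
  generalize hr : A⁻¹ * B * A = r at *
  generalize ht : A⁻¹ * B = t at *
  have hrange : (FreeGroup.lift ![t, r]).range = Subgroup.closure {t, r} := by
    rw [FreeGroup.range_lift_eq_closure]
    simp [Matrix.range_cons, Set.pair_comm]
  have hfin : ∀ i : Fin 2, ¬ IsOfFinOrder ((![t, r] : Fin 2 → _) i) := by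
    intro i h
    have h2 : IsOfFinOrder (FreeGroup.of i) := by
      rw [← hinj.isOfFinOrder_iff]
      simpa using h
    exact not_isOfFinOrder_of_isMulTorsionFree (FreeGroup.of_ne_one i) h2
  refine ⟨hfin 0, hfin 1, hcl, ?_, ?_, ?_⟩
  · let F : FreeGroup (Fin 2) →* Monoid.Coprod (Subgroup.zpowers t) (Subgroup.zpowers r) :=
      FreeGroup.lift ![Monoid.Coprod.inl ⟨t, Subgroup.mem_zpowers t⟩,
        Monoid.Coprod.inr ⟨r, Subgroup.mem_zpowers r⟩]
    have hF : (Monoid.Coprod.lift (Subgroup.zpowers t).subtype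
        (Subgroup.zpowers r).subtype).comp F = FreeGroup.lift ![t, r] := by
      ext1 i
      fin_cases i <;> simp [F]
    have hsurj : Function.Surjective F := by
      rw [← MonoidHom.range_eq_top, eq_top_iff, ← Monoid.Coprod.range_inl_sup_range_inr]
      apply sup_le
      · rintro _ ⟨⟨_, n, rfl⟩, rfl⟩
        refine ⟨FreeGroup.of 0 ^ n, ?_⟩
        simp only [map_zpow, F, FreeGroup.lift_apply_of, Matrix.cons_val_zero]
        rw [← map_zpow]; rfl
      · rintro _ ⟨⟨_, n, rfl⟩, rfl⟩
        refine ⟨FreeGroup.of 1 ^ n, ?_⟩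
        simp only [map_zpow, F, FreeGroup.lift_apply_of, Matrix.cons_val_one, Matrix.cons_val_fin_one]
        rw [← map_zpow]; rfl
    rw [← hF, MonoidHom.coe_comp] at hinj
    exact hinj.of_comp_right hsurj
  · rw [Monoid.Coprod.range_lift, Subgroup.range_subtype, Subgroup.range_subtype, hcl,
      Subgroup.zpowers_eq_closure, Subgroup.zpowers_eq_closure, ← Subgroup.closure_union]
    rfl
  · rw [hcl, ← hrange]
    exact ⟨(MonoidHom.ofInjective hinj).symm⟩
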